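/- Assume the growth conditions (GC) and the compactness-continuity conditions (CC). Let g₀ be a measurable selector and v₀ := V_{g₀}, and let v₀^e be the lower semicontinuous envelope of v₀. Then v₀^e(x) ≥ T(v₀^e)(x) for all x ∈ X. -/

import Mathlib

open MeasureTheory ProbabilityTheory Filter Topology
open scoped ENNReal

/-- The weighted norm `‖u‖_W = sup_x |u x| / W x`, valued in `ℝ≥0∞`. -/
noncomputable def WNorm {X : Type*} (W u : X → ℝ) : ℝ≥0∞ :=
  ⨆ x, ENNReal.ofReal (|u x| / W x)

/-- The dynamic programming (Bellman) operator
`Tu(x) = inf_{a ∈ A(x)} [C(x,a) + α ∫ u dQ(·|x,a)]`. -/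
noncomputable def Tbell {X A : Type*} [MeasurableSpace X] [MeasurableSpace A]
    (Adm : X → Set A) (Q : Kernel (X × A) X) (C : X × A → ℝ) (α : ℝ)
    (u : X → ℝ) (x : X) : ℝ :=
  sInf ((fun a => C (x, a) + α * ∫ y, u y ∂(Q (x, a))) '' Adm x)

/-- The lower semicontinuous envelope of `u : X → ℝ`, computed in the extended
reals: `uᵉ(x) = sup_{r>0} inf_{y ∈ B_r(x)} u(y)`. -/
noncomputable def lscEnvE {X : Type*} [MetricSpace X] (u : X → ℝ) (x : X) : EReal :=
  ⨆ r ∈ Set.Ioi (0 : ℝ), ⨅ y ∈ Metric.ball x r, (u y : EReal)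

/-!
The envelope `e = v₀ᵉ` is the largest lower semicontinuous minorant of `v₀`, so it suffices that
`T e` is another one. Minorant: `e ≤ v₀`, so using the action `g₀ x` in the infimum gives
`T e ≤ T_{g₀} v₀ = v₀`. Lower semicontinuity: with `B = ‖v₀‖_W`, the nonnegative function `e + B W`
is an increasing limit of bounded Lipschitz functions, so weak continuity of `Q` and continuity of
`∫ W dQ` make `∫ e dQ` lower semicontinuous on `K`; Berge's minimum theorem passes this on to the
infimum over the compact sets `A(x)`.
-/

section Semicontinuity

variable {X : Type*} [TopologicalSpace X] {s : Set X}

lemma lowerSemicontinuousOn_congr {R : Type*} [Preorder R] {f g : X → R}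
    (hf : LowerSemicontinuousOn f s) (hfg : Set.EqOn f g s) : LowerSemicontinuousOn g s :=
  fun x hx => LowerSemicontinuousWithinAt.congr_of_eventuallyEq (hf x hx) hx
    hfg.eventuallyEq_nhdsWithin

lemma lowerSemicontinuousOn_of_ennreal_ofReal {f : X → ℝ} (hf0 : ∀ x ∈ s, 0 ≤ f x)
    (hf : LowerSemicontinuousOn (fun x => ENNReal.ofReal (f x)) s) :
    LowerSemicontinuousOn f s := by
  intro x hx c hc
  rcases lt_or_ge c 0 with hc0 | hc0
  · filter_upwards [self_mem_nhdsWithin] with y hy using hc0.trans_le (hf0 y hy)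
  · filter_upwards [hf x hx _ ((ENNReal.ofReal_lt_ofReal_iff_of_nonneg hc0).2 hc)] with y hy
    exact (ENNReal.ofReal_lt_ofReal_iff_of_nonneg hc0).1 hy

lemma lowerSemicontinuous_coe_ereal_iff {f : X → ℝ} :
    LowerSemicontinuous (fun x => (f x : EReal)) ↔ LowerSemicontinuous f := by
  refine ⟨fun hf x c hc => ?_, fun hf =>
    continuous_coe_real_ereal.comp_lowerSemicontinuous hf EReal.coe_strictMono.monotone⟩
  filter_upwards [hf x c (EReal.coe_lt_coe_iff.2 hc)] with y hy using EReal.coe_lt_coe_iff.1 hy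

end Semicontinuity

section Berge

variable {X A R : Type*} [TopologicalSpace X] [TopologicalSpace A] {F : X → Set A}

lemma lowerSemicontinuousOn_section [Preorder R] {H : X × A → R}
    (hH : LowerSemicontinuousOn H {p | p.2 ∈ F p.1}) (x : X) :
    LowerSemicontinuousOn (fun a => H (x, a)) (F x) :=
  hH.comp (Continuous.prodMk_right x).continuousOn fun _ ha => ha

-- The tube lemma makes the strict bound uniform over a neighbourhood of the compact set `F x`.
lemma eventually_forall_mem_lt_of_upperHemicontinuousAt [Preorder R] {H : X × A → R}
    (hH : LowerSemicontinuousOn H {p | p.2 ∈ F p.1}) {x : X} (hF : UpperHemicontinuousAt F x)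
    (hFx : IsCompact (F x)) {c : R} (hc : ∀ a ∈ F x, c < H (x, a)) :
    ∀ᶠ x' in 𝓝 x, ∀ a ∈ F x', c < H (x', a) := by
  have htube : {q : A × X | q.1 ∈ F q.2 → c < H (q.2, q.1)} ∈ 𝓝ˢ (F x) ×ˢ 𝓝 x := by
    refine hFx.mem_nhdsSet_prod_of_forall fun a ha => ?_
    rw [← nhds_prod_eq]
    exact (continuous_swap.tendsto (a, x)).eventually
      (eventually_nhdsWithin_iff.1 (hH (x, a) ha c (hc a ha)))
  obtain ⟨s, hs, t, ht, hst⟩ := mem_prod_iff.1 htube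
  filter_upwards [upperHemicontinuousAt_iff.1 hF s hs, ht] with x' hx's hx't a ha
  exact hst (Set.mk_mem_prod (subset_of_mem_nhdsSet hx's ha) hx't) ha

theorem lowerSemicontinuous_sInf_image_of_upperHemicontinuous [ConditionallyCompleteLinearOrder R]
    {H : X × A → R} (hF : UpperHemicontinuous F) (hFcompact : ∀ x, IsCompact (F x))
    (hFne : ∀ x, (F x).Nonempty) (hH : LowerSemicontinuousOn H {p | p.2 ∈ F p.1}) :
    LowerSemicontinuous fun x => sInf ((fun a => H (x, a)) '' F x) := by
  intro x c hc
  have : Nonempty R := ⟨c⟩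
  have hbdd : BddBelow ((fun a => H (x, a)) '' F x) :=
    (lowerSemicontinuousOn_section hH x).bddBelow_of_isCompact (hFcompact x)
  have hlt : ∀ a ∈ F x, c < H (x, a) := fun a ha =>
    hc.trans_le (csInf_le hbdd (Set.mem_image_of_mem _ ha))
  filter_upwards [eventually_forall_mem_lt_of_upperHemicontinuousAt hH (hF x) (hFcompact x) hlt]
    with x' hx'
  obtain ⟨a, ha, hmin⟩ := (lowerSemicontinuousOn_section hH x').exists_isMinOn
    (hFne x') (hFcompact x')
  exact (hx' a ha).trans_le (le_csInf ((hFne x').image _) (Set.forall_mem_image.2 hmin))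

end Berge

section LipschitzEnvelope

variable {X : Type*} [PseudoEMetricSpace X]

/-- The Pasch–Hausdorff envelope of the truncation `min f n`: its largest `n`-Lipschitz minorant.
As `n → ∞` these bounded continuous functions increase to `f` whenever `f` is lower
semicontinuous. -/
noncomputable def lipschitzEnvelope (f : X → ℝ≥0∞) (n : ℕ) (x : X) : ℝ≥0∞ :=
  ⨅ y, min (f y) n + n * edist x y

variable (f : X → ℝ≥0∞)

lemma lipschitzEnvelope_le_min (n : ℕ) (x : X) : lipschitzEnvelope f n x ≤ min (f x) n :=
  (iInf_le _ x).trans (by simp)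

lemma lipschitzEnvelope_ne_top (n : ℕ) (x : X) : lipschitzEnvelope f n x ≠ ⊤ :=
  ne_top_of_le_ne_top (ENNReal.natCast_ne_top n)
    ((lipschitzEnvelope_le_min f n x).trans (min_le_right _ _))

lemma monotone_lipschitzEnvelope : Monotone (lipschitzEnvelope f) := by
  intro m n hmn x
  unfold lipschitzEnvelope
  gcongr

lemma continuous_lipschitzEnvelope (n : ℕ) : Continuous (lipschitzEnvelope f n) := by
  refine continuous_of_le_add_edist n (ENNReal.natCast_ne_top n) fun x z => ?_
  unfold lipschitzEnvelope
  rw [ENNReal.iInf_add]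
  refine le_iInf fun y => (iInf_le _ y).trans ?_
  calc min (f y) n + n * edist x y
      ≤ min (f y) n + n * (edist x z + edist z y) := by gcongr; exact edist_triangle x z y
    _ = min (f y) n + n * edist z y + n * edist x z := by ring

lemma iSup_lipschitzEnvelope {f : X → ℝ≥0∞} (hf : LowerSemicontinuous f) (x : X) :
    ⨆ n, lipschitzEnvelope f n x = f x := by
  refine le_antisymm
    (iSup_le fun n => (lipschitzEnvelope_le_min f n x).trans (min_le_left _ _))
    (le_of_forall_lt_imp_le_of_dense fun c hc => ?_)
  obtain ⟨δ, hδ, hball⟩ := Metric.nhds_basis_eball.eventually_iff.1 (hf x c hc)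
  obtain ⟨n, hn⟩ := ENNReal.exists_nat_mul_gt (lt_min hδ one_pos).ne' hc.ne_top
  have hcn : c ≤ n := hn.le.trans (mul_le_of_le_one_right' (min_le_right _ _))
  have hcδ : c ≤ n * δ := hn.le.trans (by gcongr; exact min_le_left _ _)
  refine le_iSup_of_le n (le_iInf fun y => ?_)
  rcases lt_or_ge (edist y x) δ with hyδ | hyδ
  · exact (le_min (hball hyδ).le hcn).trans le_self_add
  · rw [edist_comm] at hyδ
    exact hcδ.trans (le_add_left (by gcongr))

end LipschitzEnvelope

/-- Weak continuity on `K` of a family of measures: continuity of the integral of every bounded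
continuous test function. This is condition (CC)(c) when `Q` is a kernel and `K` the
graph of `A`. -/
def WeaklyContinuousOn {X Y : Type*} [TopologicalSpace X] [MeasurableSpace X] [TopologicalSpace Y]
    (Q : Y → Measure X) (K : Set Y) : Prop :=
  ∀ g : X → ℝ, Continuous g → (∃ b, ∀ y, |g y| ≤ b) →
    ContinuousOn (fun p => ∫ y, g y ∂(Q p)) K

section WeakContinuity

variable {X Y : Type*} [PseudoEMetricSpace X] [MeasurableSpace X] [OpensMeasurableSpace X]
  [TopologicalSpace Y] {Q : Y → Measure X} {K : Set Y}

namespace WeaklyContinuousOn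

lemma continuousOn_lintegral_lipschitzEnvelope [∀ p, IsFiniteMeasure (Q p)]
    (hQ : WeaklyContinuousOn Q K) (f : X → ℝ≥0∞) (n : ℕ) :
    ContinuousOn (fun p => ∫⁻ y, lipschitzEnvelope f n y ∂(Q p)) K := by
  set g : X → ℝ := fun y => (lipschitzEnvelope f n y).toReal
  have hg_cont : Continuous g := ENNReal.continuousOn_toReal.comp_continuous
    (continuous_lipschitzEnvelope f n) (lipschitzEnvelope_ne_top f n)
  have hg_bound : ∀ y, |g y| ≤ n := fun y => by
    rw [abs_of_nonneg ENNReal.toReal_nonneg]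
    exact ENNReal.toReal_le_of_le_ofReal n.cast_nonneg (by
      simpa using (lipschitzEnvelope_le_min f n y).trans (min_le_right _ _))
  have hlintegral : ∀ p, ∫⁻ y, lipschitzEnvelope f n y ∂(Q p) = ENNReal.ofReal (∫ y, g y ∂(Q p)) :=
    fun p => by
      rw [ofReal_integral_eq_lintegral_ofReal
        (.of_bound hg_cont.measurable.aestronglyMeasurable n (ae_of_all _ hg_bound))
        (ae_of_all _ fun _ => ENNReal.toReal_nonneg)]
      simp only [g, ENNReal.ofReal_toReal (lipschitzEnvelope_ne_top f n _)]
  simp only [hlintegral]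
  exact ENNReal.continuous_ofReal.comp_continuousOn (hQ g hg_cont ⟨n, hg_bound⟩)

theorem lowerSemicontinuousOn_lintegral [∀ p, IsFiniteMeasure (Q p)]
    (hQ : WeaklyContinuousOn Q K) {f : X → ℝ≥0∞} (hf : LowerSemicontinuous f) :
    LowerSemicontinuousOn (fun p => ∫⁻ y, f y ∂(Q p)) K := by
  have hsup : ∀ p, ∫⁻ y, f y ∂(Q p) = ⨆ n, ∫⁻ y, lipschitzEnvelope f n y ∂(Q p) := fun p => by
    rw [← lintegral_iSup (fun n => (continuous_lipschitzEnvelope f n).measurable)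
      (monotone_lipschitzEnvelope f)]
    simp only [iSup_lipschitzEnvelope hf]
  simp only [hsup]
  exact lowerSemicontinuousOn_iSup fun n =>
    (hQ.continuousOn_lintegral_lipschitzEnvelope f n).lowerSemicontinuousOn

theorem lowerSemicontinuousOn_integral [∀ p, IsFiniteMeasure (Q p)]
    (hQ : WeaklyContinuousOn Q K) {u w : X → ℝ} (hu : LowerSemicontinuous u)
    (hu_int : ∀ p ∈ K, Integrable u (Q p)) (hw : Continuous w)
    (hw_int : ∀ p ∈ K, Integrable w (Q p)) (hQw : ContinuousOn (fun p => ∫ y, w y ∂(Q p)) K)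
    (hwu : w ≤ u) : LowerSemicontinuousOn (fun p => ∫ y, u y ∂(Q p)) K := by
  have hsub_lsc : LowerSemicontinuous fun y => ENNReal.ofReal (u y - w y) := by
    simp only [sub_eq_add_neg]
    exact ENNReal.continuous_ofReal.comp_lowerSemicontinuous
      (hu.add hw.neg.lowerSemicontinuous) ENNReal.ofReal_mono
  have hlintegral : Set.EqOn (fun p => ∫⁻ y, ENNReal.ofReal (u y - w y) ∂(Q p))
      (fun p => ENNReal.ofReal (∫ y, u y ∂(Q p) - ∫ y, w y ∂(Q p))) K := fun p hp => by
    simp only [← integral_sub (hu_int p hp) (hw_int p hp)]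
    exact (ofReal_integral_eq_lintegral_ofReal ((hu_int p hp).sub (hw_int p hp))
      (ae_of_all _ fun y => sub_nonneg.2 (hwu y))).symm
  have hdiff : LowerSemicontinuousOn (fun p => ∫ y, u y ∂(Q p) - ∫ y, w y ∂(Q p)) K :=
    lowerSemicontinuousOn_of_ennreal_ofReal
      (fun p hp => sub_nonneg.2 (integral_mono (hw_int p hp) (hu_int p hp) hwu))
      (lowerSemicontinuousOn_congr (hQ.lowerSemicontinuousOn_lintegral hsub_lsc) hlintegral)
  simpa only [sub_add_cancel] using hdiff.add hQw.lowerSemicontinuousOn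

end WeaklyContinuousOn

end WeakContinuity

section Envelope

variable {X : Type*} [MetricSpace X] (u : X → ℝ)

lemma lscEnvE_eq_liminf (x : X) : lscEnvE u x = liminf (fun y => (u y : EReal)) (𝓝 x) :=
  Metric.nhds_basis_ball.liminf_eq_iSup_iInf.symm

lemma lscEnvE_le (x : X) : lscEnvE u x ≤ u x :=
  iSup₂_le fun _ hr => iInf₂_le x (Metric.mem_ball_self hr)

lemma lowerSemicontinuous_lscEnvE : LowerSemicontinuous (lscEnvE u) := by
  intro x c hc
  obtain ⟨d, hcd, hd⟩ := exists_between hc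
  rw [lscEnvE_eq_liminf] at hd
  filter_upwards [(eventually_lt_of_lt_liminf hd).eventually_nhds] with y hy
  rw [lscEnvE_eq_liminf]
  exact hcd.trans_le (le_liminf_of_le (h := hy.mono fun _ => le_of_lt))

variable {u}

lemma le_lscEnvE_of_lowerSemicontinuous {f : X → EReal} (hf : LowerSemicontinuous f)
    (hfu : ∀ x, f x ≤ u x) (x : X) : f x ≤ lscEnvE u x := by
  rw [lscEnvE_eq_liminf]
  exact (hf.le_liminf x).trans (liminf_le_liminf (.of_forall hfu))

theorem isGreatest_of_coe_eq_lscEnvE {e : X → ℝ} (he : ∀ x, (e x : EReal) = lscEnvE u x) :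
    IsGreatest {f : X → ℝ | LowerSemicontinuous f ∧ f ≤ u} e := by
  refine ⟨⟨lowerSemicontinuous_coe_ereal_iff.1 ?_, fun x => EReal.coe_le_coe_iff.1 ?_⟩,
    fun f ⟨hf, hfu⟩ x => EReal.coe_le_coe_iff.1 ?_⟩
  · simpa only [he] using lowerSemicontinuous_lscEnvE u
  · exact he x ▸ lscEnvE_le u x
  · exact he x ▸ le_lscEnvE_of_lowerSemicontinuous (lowerSemicontinuous_coe_ereal_iff.2 hf)
      (fun y => EReal.coe_le_coe_iff.2 (hfu y)) x

end Envelope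

section Bellman

variable {X A : Type*} [TopologicalSpace X] [MeasurableSpace X] [TopologicalSpace A]
  [MeasurableSpace A] {Adm : X → Set A} {Q : Kernel (X × A) X} {C : X × A → ℝ} {α : ℝ} {u : X → ℝ}

lemma lowerSemicontinuousOn_cost_add_integral {K : Set (X × A)} (hα : 0 ≤ α)
    (hC : LowerSemicontinuousOn C K)
    (hu : LowerSemicontinuousOn (fun p => ∫ y, u y ∂(Q p)) K) :
    LowerSemicontinuousOn (fun p => C p + α * ∫ y, u y ∂(Q p)) K :=
  hC.add ((continuous_const_mul α).comp_lowerSemicontinuousOn hu (monotone_mul_left_of_nonneg hα))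

lemma Tbell_le_of_mem {x : X} {a : A} (hα : 0 ≤ α) (hAdm : IsCompact (Adm x))
    (hC : LowerSemicontinuousOn C {p | p.2 ∈ Adm p.1})
    (hu : LowerSemicontinuousOn (fun p => ∫ y, u y ∂(Q p)) {p | p.2 ∈ Adm p.1})
    (ha : a ∈ Adm x) : Tbell Adm Q C α u x ≤ C (x, a) + α * ∫ y, u y ∂(Q (x, a)) :=
  csInf_le ((lowerSemicontinuousOn_section
      (lowerSemicontinuousOn_cost_add_integral hα hC hu) x).bddBelow_of_isCompact hAdm)
    (Set.mem_image_of_mem _ ha)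

theorem lowerSemicontinuous_Tbell (hα : 0 ≤ α) (hAdm : UpperHemicontinuous Adm)
    (hAcomp : ∀ x, IsCompact (Adm x)) (hAne : ∀ x, (Adm x).Nonempty)
    (hC : LowerSemicontinuousOn C {p | p.2 ∈ Adm p.1})
    (hu : LowerSemicontinuousOn (fun p => ∫ y, u y ∂(Q p)) {p | p.2 ∈ Adm p.1}) :
    LowerSemicontinuous (Tbell Adm Q C α u) :=
  lowerSemicontinuous_sInf_image_of_upperHemicontinuous hAdm hAcomp hAne
    (lowerSemicontinuousOn_cost_add_integral hα hC hu)

end Bellman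

lemma exists_abs_le_mul_of_WNorm_lt_top {X : Type*} {W u : X → ℝ} (hW : ∀ x, 0 < W x)
    (hu : WNorm W u < ⊤) : ∃ B, ∀ x, |u x| ≤ B * W x := by
  refine ⟨(WNorm W u).toReal, fun x => (div_le_iff₀ (hW x)).1 ?_⟩
  exact (ENNReal.ofReal_le_iff_le_toReal hu.ne).1
    (le_iSup (fun x => ENNReal.ofReal (|u x| / W x)) x)

theorem envelope_superharmonic_general {X A : Type*}
    [MetricSpace X] [MeasurableSpace X] [OpensMeasurableSpace X]
    [TopologicalSpace A] [MeasurableSpace A]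
    {Adm : X → Set A} {Q : Kernel (X × A) X} [IsFiniteKernel Q] {C : X × A → ℝ}
    {α : ℝ} (hα : 0 ≤ α)
    (hAdm : UpperHemicontinuous Adm) (hAcomp : ∀ x, IsCompact (Adm x))
    (hC : LowerSemicontinuousOn C {p | p.2 ∈ Adm p.1})
    (hQ : WeaklyContinuousOn Q {p | p.2 ∈ Adm p.1})
    {w : X → ℝ} (hw : Continuous w) (hw_int : ∀ p ∈ {p | p.2 ∈ Adm p.1}, Integrable w (Q p))
    (hQw : ContinuousOn (fun p => ∫ y, w y ∂(Q p)) {p | p.2 ∈ Adm p.1})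
    {v : X → ℝ} (hwv : w ≤ v) (hv_int : ∀ p ∈ {p | p.2 ∈ Adm p.1}, Integrable v (Q p))
    (hv : ∀ x, ∃ a ∈ Adm x, C (x, a) + α * ∫ y, v y ∂(Q (x, a)) ≤ v x)
    {e : X → ℝ} (he : ∀ x, (e x : EReal) = lscEnvE v x) (x : X) :
    Tbell Adm Q C α e x ≤ e x := by
  obtain ⟨⟨he_lsc, hev⟩, he_max⟩ := isGreatest_of_coe_eq_lscEnvE he
  have hwe : w ≤ e := he_max ⟨hw.lowerSemicontinuous, hwv⟩
  have he_int : ∀ p ∈ {p | p.2 ∈ Adm p.1}, Integrable e (Q p) := fun p hp =>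
    integrable_of_le_of_le he_lsc.measurable.aestronglyMeasurable
      (ae_of_all _ hwe) (ae_of_all _ hev) (hw_int p hp) (hv_int p hp)
  have hQe := hQ.lowerSemicontinuousOn_integral he_lsc he_int hw hw_int hQw hwe
  have hTe_lsc : LowerSemicontinuous (Tbell Adm Q C α e) :=
    lowerSemicontinuous_Tbell hα hAdm hAcomp (fun y => (hv y).imp fun _ => And.left) hC hQe
  refine he_max ⟨hTe_lsc, fun y => ?_⟩ x
  obtain ⟨a, ha, hav⟩ := hv y
  have hint : ∫ z, e z ∂(Q (y, a)) ≤ ∫ z, v z ∂(Q (y, a)) :=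
    integral_mono (he_int _ ha) (hv_int _ ha) hev
  calc Tbell Adm Q C α e y
      ≤ C (y, a) + α * ∫ z, e z ∂(Q (y, a)) := Tbell_le_of_mem hα (hAcomp y) hC hQe ha
    _ ≤ C (y, a) + α * ∫ z, v z ∂(Q (y, a)) := by gcongr
    _ ≤ v y := hav

/-- Under (GC) and (CC), for any measurable selector `g₀` with value function
`v₀ = V_{g₀}` and lower semicontinuous envelope `v₀ᵉ`, one has `v₀ᵉ ≥ T(v₀ᵉ)`
pointwise (Lemma 1(a) of the paper). -/
theorem envelope_superharmonic {X A : Type*}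
    [MetricSpace X] [PolishSpace X] [MeasurableSpace X] [BorelSpace X]
    [MetricSpace A] [PolishSpace A] [MeasurableSpace A] [BorelSpace A]
    (Adm : X → Set A) (hAne : ∀ x, (Adm x).Nonempty)
    (hKmeas : MeasurableSet {p : X × A | p.2 ∈ Adm p.1})
    (Q : Kernel (X × A) X) [IsMarkovKernel Q]
    (C : X × A → ℝ) (hCmeas : Measurable C)
    (α : ℝ) (hα0 : 0 < α) (hα1 : α < 1)
    (M β : ℝ) (hM : 0 < M) (hβ : 1 < β)
    (W : X → ℝ) (hWmeas : Measurable W) (hW1 : ∀ x, 1 ≤ W x)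
    (hCW : ∀ x, ∀ a ∈ Adm x, |C (x, a)| ≤ M * W x)
    (hQW : ∀ x, ∀ a ∈ Adm x,
      ∫⁻ y, ENNReal.ofReal (W y) ∂(Q (x, a)) ≤ ENNReal.ofReal (β * W x))
    (hγ : α * β < 1)
    (hAcomp : ∀ x, IsCompact (Adm x))
    (hAusc : ∀ x, ∀ U : Set A, IsOpen U → Adm x ⊆ U → ∀ᶠ x' in 𝓝 x, Adm x' ⊆ U)
    (hClsc : LowerSemicontinuousOn C {p : X × A | p.2 ∈ Adm p.1})
    (hQweak : ∀ g : X → ℝ, Continuous g → (∃ b, ∀ y, |g y| ≤ b) →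
      ContinuousOn (fun p : X × A => ∫ y, g y ∂(Q p)) {p : X × A | p.2 ∈ Adm p.1})
    (hWcont : Continuous W)
    (hQWcont : ContinuousOn (fun p : X × A => ∫ y, W y ∂(Q p))
      {p : X × A | p.2 ∈ Adm p.1})
    (g₀ : X → A) (hg₀ : Measurable g₀) (hg₀sel : ∀ x, g₀ x ∈ Adm x)
    (v₀ : X → ℝ) (hv₀meas : Measurable v₀) (hv₀W : WNorm W v₀ < ⊤)
    (hv₀fix : ∀ x, v₀ x = C (x, g₀ x) + α * ∫ y, v₀ y ∂(Q (x, g₀ x)))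
    (e : X → ℝ) (hE : ∀ x, (e x : EReal) = lscEnvE v₀ x)
    : ∀ x, Tbell Adm Q C α e x ≤ e x := by
  have hW0 : ∀ x, 0 < W x := fun x => one_pos.trans_le (hW1 x)
  obtain ⟨B, hB⟩ := exists_abs_le_mul_of_WNorm_lt_top hW0 hv₀W
  have hW_int : ∀ p ∈ {p : X × A | p.2 ∈ Adm p.1}, Integrable W (Q p) := fun p hp =>
    (lintegral_ofReal_ne_top_iff_integrable hWmeas.aestronglyMeasurable
      (ae_of_all _ fun y => (hW0 y).le)).1 ((hQW p.1 p.2 hp).trans_lt ENNReal.ofReal_lt_top).ne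
  have hv_int : ∀ p ∈ {p : X × A | p.2 ∈ Adm p.1}, Integrable v₀ (Q p) := fun p hp =>
    ((hW_int p hp).const_mul B).mono' hv₀meas.aestronglyMeasurable (ae_of_all _ hB)
  exact envelope_superharmonic_general hα0.le (.of_forall_isOpen hAusc) hAcomp hClsc hQweak
    (hWcont.const_mul (-B)) (fun p hp => (hW_int p hp).const_mul (-B))
    (by simpa only [integral_const_mul] using hQWcont.const_mul (-B))
    (fun x => by simpa only [neg_mul] using neg_le_of_abs_le (hB x)) hv_int
    (fun x => ⟨g₀ x, hg₀sel x, (hv₀fix x).ge⟩) hE
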